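/- For all coprime integers a, b with 3 ≤ a ≤ 15 and b ≥ 181, the number π*(a,b) of primes not representable as au + bv with u, v nonnegative integers satisfies π*(a,b) > 0.05334 · π(S(a,b)), where S(a,b) = ab − a − b and π(x) is the number of primes not exceeding x. -/

import Mathlib

/-- `piStar a b` is the number of primes not representable as `a*u + b*v`
with `u, v` nonnegative integers, i.e. the number of primes not in the
numerical semigroup `⟨a, b⟩`. -/
noncomputable def piStar (a b : ℕ) : ℕ :=
  Set.ncard {p : ℕ | p.Prime ∧ ¬ ∃ u v : ℕ, p = a * u + b * v}

/-- `S a b = a*b - a - b` (the Frobenius-type quantity). -/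
def S (a b : ℕ) : ℕ := a * b - a - b

/-!
Every prime below `b` other than `a` avoids `⟨a, b⟩`, while `S a b ≤ 14 * b`, so it is enough to
compare `π (14 * b)` with the number of primes below `b`. For large `b` this is a matter of
Chebyshev's method: the integer combination `⌊x⌋ - ⌊x/2⌋ - ⌊x/3⌋ - ⌊x/5⌋ + ⌊x/30⌋` takes only the
values `0` and `1`, and it equals `1` for `1 ≤ x < 6`. Hence the same combination of
`log ⌊n/k⌋!`, which Stirling's formula evaluates as `0.9212… * n + O(log n)`, lies between
`θ n - θ (n / 6)` and `ψ n`. The resulting upper bound for `θ` also yields a linear upper bound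
for `π` which is sharp enough for the remaining `b`; there the primes between `53`
and `53 ^ 2` are counted as the integers coprime to `primorial 52`.
-/

section

open Finset
open Real (log)
open scoped ArithmeticFunction.vonMangoldt Chebyshev Nat Nat.Prime

theorem mul_log_sub_log_le {x y : ℝ} (hx : 0 < x) (hy : 0 < y) :
    y * (log x - log y) ≤ x - y := by
  rw [← Real.log_div hx.ne' hy.ne']
  calc y * log (x / y) ≤ y * (x / y - 1) := by
        gcongr
        exact Real.log_le_sub_one_of_pos (by positivity)
    _ = x - y := by field_simp

theorem mul_log_sub_add_one_le_log_factorial {n : ℕ} (hn : 1 ≤ n) :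
    n * log n - n + 1 ≤ log n ! := by
  induction n, hn using Nat.le_induction with
  | base => simp
  | succ n hn ih =>
    have hn0 : (0 : ℝ) < n := by exact_mod_cast hn
    have tangent := mul_log_sub_log_le (x := n + 1) (by positivity) hn0
    rw [Nat.factorial_succ]
    push_cast
    rw [Real.log_mul (by positivity) (by positivity)]
    linarith

theorem log_factorial_le_add_one_mul_log_sub_add_one {n : ℕ} (hn : 1 ≤ n) :
    log n ! ≤ (n + 1) * log n - n + 1 := by
  induction n, hn using Nat.le_induction with
  | base => simp
  | succ n hn ih =>
    have hn0 : (0 : ℝ) < n := by exact_mod_cast hn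
    have tangent := mul_log_sub_log_le (y := n + 1) hn0 (by positivity)
    rw [Nat.factorial_succ]
    push_cast
    rw [Real.log_mul (by positivity) (by positivity)]
    linarith

theorem abs_log_factorial_floor_sub_le {x : ℝ} (hx : 1 ≤ x) :
    |log ⌊x⌋₊ ! - (x * log x - x + 1)| ≤ log x := by
  set m := ⌊x⌋₊
  have hm : 1 ≤ m := Nat.one_le_floor_iff x |>.2 hx
  have hm1 : (1 : ℝ) ≤ m := by exact_mod_cast hm
  have hmx : (m : ℝ) ≤ x := Nat.floor_le (by linarith)
  have hxm : x < m + 1 := Nat.lt_floor_add_one x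
  have hlogm : 0 ≤ log m := Real.log_nonneg hm1
  have hlog : log m ≤ log x := Real.log_le_log (by linarith) hmx
  have lower := mul_log_sub_add_one_le_log_factorial hm
  have upper := log_factorial_le_add_one_mul_log_sub_add_one hm
  have tangent_m := mul_log_sub_log_le (x := x) (y := m) (by linarith) (by linarith)
  have tangent_x := mul_log_sub_log_le (x := m) (y := x) (by linarith) (by linarith)
  rw [abs_le]
  constructor <;> nlinarith

theorem log_factorial_eq_sum_vonMangoldt {m n : ℕ} (hmn : m ≤ n) :
    log m ! = ∑ d ∈ Ioc 0 n, Λ d * (m / d : ℕ) := by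
  have log_eq_sum_log : log m ! = ∑ k ∈ Ioc 0 m, log k := by
    rw [← prod_Ico_id_eq_factorial, Nat.cast_prod, Real.log_prod fun k hk ↦
      Nat.cast_ne_zero.2 (Nat.one_le_iff_ne_zero.1 (mem_Ico.1 hk).1)]
    rfl
  calc log m ! = ∑ d ∈ Ioc 0 m, Λ d * (m / d : ℕ) := by
        rw [log_eq_sum_log, ← ArithmeticFunction.sum_Ioc_mul_zeta_eq_sum,
          ArithmeticFunction.vonMangoldt_mul_zeta]
        rfl
    _ = ∑ d ∈ Ioc 0 n, Λ d * (m / d : ℕ) := by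
        refine sum_subset (Ioc_subset_Ioc_right hmn) fun d hd hdm ↦ ?_
        simp only [mem_Ioc, not_and, not_le] at hd hdm
        simp [Nat.div_eq_of_lt (hdm hd.1)]

/-- Chebyshev's combination `m - ⌊m/2⌋ - ⌊m/3⌋ - ⌊m/5⌋ + ⌊m/30⌋` of integer parts, the weight of
`Λ d` in `chebyshevCombination n` for `m = n / d`. Real-valued, so that no subtraction truncates. -/
noncomputable def chebyshevWeight (m : ℕ) : ℝ :=
  m - (m / 2 : ℕ) - (m / 3 : ℕ) - (m / 5 : ℕ) + (m / 30 : ℕ)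

theorem chebyshevWeight_nonneg (m : ℕ) : 0 ≤ chebyshevWeight m := by
  have h : m / 2 + m / 3 + m / 5 ≤ m + m / 30 := by omega
  have h' : ((m / 2 : ℕ) : ℝ) + (m / 3 : ℕ) + (m / 5 : ℕ) ≤ m + (m / 30 : ℕ) := by exact_mod_cast h
  unfold chebyshevWeight
  linarith

theorem chebyshevWeight_le_one (m : ℕ) : chebyshevWeight m ≤ 1 := by
  have h : m + m / 30 ≤ m / 2 + m / 3 + m / 5 + 1 := by omega
  have h' : (m : ℝ) + (m / 30 : ℕ) ≤ (m / 2 : ℕ) + (m / 3 : ℕ) + (m / 5 : ℕ) + 1 := by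
    exact_mod_cast h
  unfold chebyshevWeight
  linarith

theorem chebyshevWeight_eq_one {m : ℕ} (hm : 0 < m) (hm6 : m < 6) : chebyshevWeight m = 1 := by
  interval_cases m <;> norm_num [chebyshevWeight]

/-- The combination `T(n) - T(n/2) - T(n/3) - T(n/5) + T(n/30)` of `T(x) = log ⌊x⌋!` through which
Chebyshev bounded `θ` and `ψ`. -/
noncomputable def chebyshevCombination (n : ℕ) : ℝ :=
  log n ! - log (n / 2)! - log (n / 3)! - log (n / 5)! + log (n / 30)!

theorem chebyshevCombination_eq_sum (n : ℕ) :
    chebyshevCombination n = ∑ d ∈ Ioc 0 n, Λ d * chebyshevWeight (n / d) := by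
  have log_factorial_div (k : ℕ) : log (n / k)! = ∑ d ∈ Ioc 0 n, Λ d * (n / d / k : ℕ) := by
    simp_rw [log_factorial_eq_sum_vonMangoldt (Nat.div_le_self n k), Nat.div_right_comm n k]
  rw [chebyshevCombination, log_factorial_eq_sum_vonMangoldt le_rfl]
  simp only [log_factorial_div, chebyshevWeight, mul_add, mul_sub, sum_add_distrib,
    sum_sub_distrib]

theorem chebyshevCombination_le_psi (n : ℕ) : chebyshevCombination n ≤ ψ n := by
  rw [chebyshevCombination_eq_sum, Chebyshev.psi, Nat.floor_natCast]
  exact sum_le_sum fun d _ ↦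
    mul_le_of_le_one_right ArithmeticFunction.vonMangoldt_nonneg (chebyshevWeight_le_one _)

theorem theta_le_theta_div_six_add_chebyshevCombination (n : ℕ) :
    θ n ≤ θ (n / 6 : ℕ) + chebyshevCombination n := by
  have hn : n / 6 ≤ n := Nat.div_le_self n 6
  simp only [Chebyshev.theta, Nat.floor_natCast, sum_filter]
  rw [← sum_Ioc_consecutive _ (Nat.zero_le _) hn, chebyshevCombination_eq_sum]
  gcongr
  calc ∑ d ∈ Ioc (n / 6) n, (if d.Prime then log d else 0)
      ≤ ∑ d ∈ Ioc (n / 6) n, Λ d * chebyshevWeight (n / d) := by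
        refine sum_le_sum fun d hd ↦ ?_
        rw [mem_Ioc] at hd
        have hd0 : 0 < d := by omega
        have quotient_lt_six : n / d < 6 := by
          rw [Nat.div_lt_iff_lt_mul hd0]
          omega
        rw [chebyshevWeight_eq_one (Nat.div_pos hd.2 hd0) quotient_lt_six, mul_one]
        split_ifs with hp
        · exact (ArithmeticFunction.vonMangoldt_apply_prime hp).ge
        · exact ArithmeticFunction.vonMangoldt_nonneg
    _ ≤ ∑ d ∈ Ioc 0 n, Λ d * chebyshevWeight (n / d) :=
        sum_le_sum_of_subset_of_nonneg (Ioc_subset_Ioc_left (Nat.zero_le _)) fun d _ _ ↦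
          mul_nonneg ArithmeticFunction.vonMangoldt_nonneg (chebyshevWeight_nonneg _)

/-- The constant `0.92129…` in Chebyshev's estimates `A * x + O(log x) ≤ ψ x` and
`θ x ≤ 6 / 5 * A * x + O(log² x)`. -/
noncomputable def chebyshevConst : ℝ :=
  log 2 / 2 + log 3 / 3 + log 5 / 5 - log 30 / 30

theorem log_thirty : log 30 = log 2 + log 3 + log 5 := by
  rw [← Real.log_mul (by norm_num) (by norm_num), ← Real.log_mul (by norm_num) (by norm_num)]
  norm_num

theorem chebyshevConst_gt : 0.9212 < chebyshevConst := by
  rw [chebyshevConst, log_thirty]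
  linarith [Real.log_two_gt_d9, Real.log_three_gt_d9, Real.log_five_gt_d9]

theorem chebyshevConst_lt : chebyshevConst < 0.9213 := by
  rw [chebyshevConst, log_thirty]
  linarith [Real.log_two_lt_d9, Real.log_three_lt_d9, Real.log_five_lt_d9]

theorem abs_chebyshevCombination_sub_le {n : ℕ} (hn : 30 ≤ n) :
    |chebyshevCombination n - (chebyshevConst * n - 1)| ≤ 5 * log n - 2 * log 30 := by
  have log_factorial_div {k : ℕ} (hk : 0 < k) (hkn : k ≤ n) :
      |log (n / k)! - (n / k * (log n - log k) - n / k + 1)| ≤ log n - log k := by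
    have hk0 : (0 : ℝ) < k := by exact_mod_cast hk
    have hkn' : (k : ℝ) ≤ n := by exact_mod_cast hkn
    have h := abs_log_factorial_floor_sub_le ((one_le_div hk0).2 hkn')
    rwa [Nat.floor_div_eq_div, Real.log_div (by linarith) hk0.ne'] at h
  have h1 := log_factorial_div one_pos (by omega)
  have h2 := log_factorial_div two_pos (by omega)
  have h3 := log_factorial_div three_pos (by omega)
  have h5 := log_factorial_div (k := 5) (by norm_num) (by omega)
  have h30 := log_factorial_div (k := 30) (by norm_num) hn
  simp only [Nat.div_one, Nat.cast_one, Real.log_one, Nat.cast_ofNat, abs_le, log_thirty]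
    at h1 h2 h3 h5 h30 ⊢
  simp only [chebyshevCombination, chebyshevConst, log_thirty]
  constructor <;> linarith

theorem chebyshevCombination_le {n : ℕ} (hn : 30 ≤ n) :
    chebyshevCombination n ≤ 0.9213 * n + 5 * log n - 7.8 := by
  have h := (abs_le.1 (abs_chebyshevCombination_sub_le hn)).2
  have hA : chebyshevConst * n ≤ 0.9213 * n := by gcongr; exact chebyshevConst_lt.le
  linarith [log_thirty, Real.log_two_gt_d9, Real.log_three_gt_d9, Real.log_five_gt_d9]

theorem le_chebyshevCombination {n : ℕ} (hn : 30 ≤ n) :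
    0.9212 * n - 5 * log n + 5.8 ≤ chebyshevCombination n := by
  have h := (abs_le.1 (abs_chebyshevCombination_sub_le hn)).1
  have hA : 0.9212 * n ≤ chebyshevConst * n := by gcongr; exact chebyshevConst_gt.le
  linarith [log_thirty, Real.log_two_gt_d9, Real.log_three_gt_d9, Real.log_five_gt_d9]

theorem theta_le_linear (n : ℕ) : θ n ≤ 1.13 * n + 420 := by
  induction n using Nat.strong_induction_on with
  | _ n ih =>
    rcases le_or_gt n 1600 with hn | hn
    · have hn' : (n : ℝ) ≤ 1600 := by exact_mod_cast hn
      have log_four : log 4 = 2 * log 2 := by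
        rw [show (4 : ℝ) = 2 ^ 2 by norm_num, Real.log_pow, Nat.cast_ofNat]
      have hθ := Chebyshev.theta_le_log4_mul_x n.cast_nonneg
      have hlog : log 4 * n ≤ 1.3863 * n := by gcongr; linarith [Real.log_two_lt_d9]
      linarith
    · have hn' : (1600 : ℝ) < n := by exact_mod_cast hn
      have log_1600 : log 1600 = 6 * log 2 + 2 * log 5 := by
        rw [show (1600 : ℝ) = 2 ^ 6 * 5 ^ 2 by norm_num,
          Real.log_mul (by norm_num) (by norm_num), Real.log_pow, Real.log_pow]
        norm_num
      have tangent := mul_log_sub_log_le (x := n) (y := 1600) (by linarith) (by norm_num)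
      have hdiv : ((n / 6 : ℕ) : ℝ) ≤ n / 6 := Nat.cast_div_le
      linarith [theta_le_theta_div_six_add_chebyshevCombination n, ih (n / 6) (by omega),
        chebyshevCombination_le (n := n) (by omega), Real.log_two_lt_d9, Real.log_five_lt_d9]

theorem primeCounting_sub_mul_log_le_theta (m n : ℕ) :
    ((π n : ℝ) - π m) * log m ≤ θ n := by
  rcases m.eq_zero_or_pos with rfl | hm
  · simpa using Chebyshev.theta_nonneg n
  have card_le : (π n : ℝ) - π m ≤ #(Nat.primesLE n \ Nat.primesLE m) := by
    rw [sub_le_iff_le_add, ← Nat.primesLE_card_eq_primeCounting,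
      ← Nat.primesLE_card_eq_primeCounting]
    exact_mod_cast card_le_card_sdiff_add_card
  rw [Chebyshev.theta_eq_sum_primesLE_log]
  calc ((π n : ℝ) - π m) * log m
      ≤ #(Nat.primesLE n \ Nat.primesLE m) * log m := by
        gcongr
    _ ≤ ∑ p ∈ Nat.primesLE n \ Nat.primesLE m, log p := by
        rw [← nsmul_eq_mul]
        refine card_nsmul_le_sum _ _ _ fun p hp ↦ ?_
        simp only [mem_sdiff, Nat.mem_primesLE, not_and] at hp
        have hmp : m ≤ p := by
          by_contra hpm
          exact hp.2 (by omega) hp.1.2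
        gcongr
    _ ≤ ∑ p ∈ Nat.primesLE n, log p :=
        sum_le_sum_of_subset_of_nonneg sdiff_subset fun p _ _ ↦ Real.log_natCast_nonneg p

theorem coprime_primorial_iff_lt_minFac {k n : ℕ} (hn : n ≠ 1) :
    (primorial k).Coprime n ↔ k < n.minFac := by
  refine ⟨fun h ↦ ?_, fun h ↦ Nat.coprime_of_dvd fun p hp hpk hpn ↦ ?_⟩
  · by_contra! hle
    have minFac_dvd_primorial := (Nat.minFac_prime hn).dvd_primorial_iff.2 hle
    exact Nat.not_coprime_of_dvd_of_dvd (Nat.minFac_prime hn).one_lt minFac_dvd_primorial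
      n.minFac_dvd h
  · exact (h.trans_le (Nat.minFac_le_of_dvd hp.two_le hpn)).not_ge (hp.dvd_primorial_iff.1 hpk)

theorem coprime_primorial_iff_prime {k n : ℕ} (hkn : k < n) (hn : n < (k + 1) ^ 2) :
    (primorial k).Coprime n ↔ n.Prime := by
  have hn1 : n ≠ 1 := by
    rintro rfl
    simp [Nat.lt_one_iff.1 hkn] at hn
  rw [coprime_primorial_iff_lt_minFac hn1]
  refine ⟨fun h ↦ ?_, fun h ↦ h.minFac_eq.symm ▸ hkn⟩
  by_contra hprime
  have sq_le := Nat.minFac_sq_le_self (by omega) hprime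
  exact (sq_le.trans_lt hn).not_ge (Nat.pow_le_pow_left h 2)

theorem count_coprime_primorial_succ {k : ℕ} (hk : 2 ≤ k) :
    Nat.count (primorial k).Coprime (k + 1) = 1 := by
  have filter_eq : {n ∈ range (k + 1) | (primorial k).Coprime n} = {1} := by
    ext n
    rw [mem_filter, mem_range, mem_singleton]
    refine ⟨fun ⟨hnk, h⟩ ↦ ?_, ?_⟩
    · by_contra hn
      have lt_minFac := (coprime_primorial_iff_lt_minFac hn).1 h
      rcases n.eq_zero_or_pos with rfl | hn0
      · exact hk.not_gt (Nat.minFac_zero ▸ lt_minFac)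
      · have := Nat.minFac_le hn0
        omega
    · rintro rfl
      exact ⟨by omega, Nat.coprime_one_right _⟩
  rw [Nat.count_eq_card_filter_range, filter_eq, card_singleton]

theorem primeCounting'_add_one_eq_add_count_coprime_primorial {k n : ℕ} (hk : 2 ≤ k) (hkn : k < n)
    (hn : n ≤ (k + 1) ^ 2) : π' n + 1 = π k + Nat.count (primorial k).Coprime n := by
  induction n, hkn using Nat.le_induction with
  | base => rw [count_coprime_primorial_succ hk, Nat.primeCounting]
  | succ n hkn ih =>
    have coprime_iff := coprime_primorial_iff_prime hkn hn
    rw [Nat.primeCounting', Nat.count_succ, Nat.count_succ, ← add_assoc, ← ih (by omega),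
      Nat.primeCounting']
    simp only [coprime_iff]
    omega

theorem primeCounting'_eq_add_count {n : ℕ} (hn : 52 < n) (hn' : n ≤ 2809) :
    π' n = 14 + Nat.count (Nat.Coprime 614889782588491410) n := by
  have primorial_52 : primorial 52 = 614889782588491410 := by decide +kernel
  have primeCounting_52 : π 52 = 15 := by decide +kernel
  have h := primeCounting'_add_one_eq_add_count_coprime_primorial (by norm_num) hn hn'
  simp only [primorial_52, primeCounting_52] at h
  omega

theorem primeCounting_512 : π 512 = 97 := by
  rw [Nat.primeCounting, primeCounting'_eq_add_count (by norm_num) (by norm_num)]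
  decide +kernel

theorem primeCounting_le_linear (n : ℕ) : (π n : ℝ) ≤ 0.1812 * n + 165 := by
  have log_512 : log (512 : ℕ) = 9 * log 2 := by
    rw [show ((512 : ℕ) : ℝ) = 2 ^ 9 by norm_num, Real.log_pow, Nat.cast_ofNat]
  have h := (primeCounting_sub_mul_log_le_theta 512 n).trans (theta_le_linear n)
  rw [primeCounting_512, log_512, Nat.cast_ofNat] at h
  by_contra! hπ
  have lower : (π n - 97) * (9 * 0.6931) ≤ (π n - 97) * (9 * log 2) := by
    gcongr
    · linarith [n.cast_nonneg (α := ℝ)]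
    · linarith [Real.log_two_gt_d9]
  linarith

theorem linear_lt_primeCounting' {b : ℕ} (hb : 180 ≤ b) (hb' : b < 2700) :
    (0.136 * b + 10 : ℝ) < π' b := by
  have table : ∀ q ∈ Ico 4 60, 136 * (45 * q + 44) + 10000 <
      1000 * (14 + Nat.count (Nat.Coprime 614889782588491410) (45 * q)) := by
    decide +kernel
  have at_multiple := table (b / 45) (by rw [mem_Ico]; omega)
  rw [← primeCounting'_eq_add_count (by omega) (by omega)] at at_multiple
  have mono : π' (45 * (b / 45)) ≤ π' b := Nat.monotone_primeCounting' (by omega)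
  have h : 136 * b + 10000 < 1000 * π' b := by omega
  have h' : (136 * b + 10000 : ℝ) < 1000 * π' b := by exact_mod_cast h
  linarith

theorem mul_primeCounting_lt_primeCounting'_of_lt {b : ℕ} (hb : 180 ≤ b) (hb' : b < 2700) :
    (0.05334 : ℝ) * π (14 * b) < π' b - 1 := by
  have upper := primeCounting_le_linear (14 * b)
  have lower := linear_lt_primeCounting' hb hb'
  push_cast at upper
  linarith

theorem mul_primeCounting_lt_primeCounting'_of_ge {b : ℕ} (hb : 2700 ≤ b) :
    (0.05334 : ℝ) * π (14 * b) < π' b - 1 := by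
  have hb' : (2700 : ℝ) ≤ b := by exact_mod_cast hb
  have hlog : 0 < log b := Real.log_pos (by linarith)
  have upper := (primeCounting_sub_mul_log_le_theta b (14 * b)).trans (theta_le_linear _)
  have lower := (le_chebyshevCombination (n := b) (by omega)).trans <|
    (chebyshevCombination_le_psi b).trans (Chebyshev.psi_le_primeCounting_mul_log b)
  have log_2700 : log 2700 = 2 * log 2 + 3 * log 3 + 2 * log 5 := by
    rw [show (2700 : ℝ) = 2 ^ 2 * 3 ^ 3 * 5 ^ 2 by norm_num, Real.log_mul (by norm_num)
      (by norm_num), Real.log_mul (by norm_num) (by norm_num), Real.log_pow, Real.log_pow,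
      Real.log_pow]
    norm_num
  have tangent := mul_log_sub_log_le (x := b) (y := 2700) (by linarith) (by norm_num)
  have scaled : (0.05334 : ℝ) * π (14 * b) * log b < (π b - 2) * log b := by
    push_cast at upper
    linarith [Real.log_two_lt_d9, Real.log_three_lt_d9, Real.log_five_lt_d9]
  have primeCounting_le : π b ≤ π' b + 1 := by
    rw [Nat.primeCounting, Nat.primeCounting', Nat.count_succ]
    split_ifs <;> omega
  have primeCounting_le' : (π b : ℝ) ≤ π' b + 1 := by exact_mod_cast primeCounting_le
  linarith [lt_of_mul_lt_mul_right scaled hlog.le]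

end

theorem finite_setOf_prime_not_representable {a b : ℕ} (h : a.Coprime b) :
    {p : ℕ | p.Prime ∧ ¬ ∃ u v : ℕ, p = a * u + b * v}.Finite := by
  refine (Set.finite_lt_nat (a.pred * b.pred)).subset fun p ⟨_, hp⟩ ↦ ?_
  by_contra hlt
  obtain ⟨u, v, huv⟩ := Nat.exists_add_mul_eq_of_gcd_dvd_of_mul_pred_le a b p
    (h.gcd_eq_one ▸ one_dvd p) (not_lt.1 hlt)
  exact hp ⟨u, v, by rw [← huv, mul_comm u, mul_comm v]⟩

theorem not_representable_of_prime_of_lt {a b p : ℕ} (ha : a ≠ 1) (hp : p.Prime) (hpa : p ≠ a)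
    (hpb : p < b) : ¬ ∃ u v : ℕ, p = a * u + b * v := by
  rintro ⟨u, v, huv⟩
  rcases v.eq_zero_or_pos with rfl | hv
  · rcases (Nat.dvd_prime hp).1 (Dvd.intro u (by simpa using huv.symm)) with h1 | h1
    · exact ha h1
    · exact hpa h1.symm
  · have hbv : b ≤ b * v := Nat.le_mul_of_pos_right b hv
    omega

theorem primeCounting'_sub_one_le_piStar {a b : ℕ} (ha : a ≠ 1) (h : a.Coprime b) :
    b.primeCounting' - 1 ≤ piStar a b := by
  have hsub : (b.primesBelow.erase a : Set ℕ) ⊆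
      {p : ℕ | p.Prime ∧ ¬ ∃ u v : ℕ, p = a * u + b * v} := fun p hp ↦ by
    rw [Finset.mem_coe, Finset.mem_erase, Nat.mem_primesBelow] at hp
    exact ⟨hp.2.2, not_representable_of_prime_of_lt ha hp.2.2 hp.1 hp.2.1⟩
  calc b.primeCounting' - 1 ≤ (b.primesBelow.erase a).card := by
        rw [← Nat.primesBelow_card_eq_primeCounting']
        exact Finset.pred_card_le_card_erase
    _ ≤ piStar a b := by
        rw [← Set.ncard_coe_finset]
        exact Set.ncard_le_ncard hsub (finite_setOf_prime_not_representable h)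

theorem S_le_pred_mul (a b : ℕ) : S a b ≤ (a - 1) * b := by
  rw [S, Nat.sub_one_mul]
  omega

theorem piStar_gt_case4_general (a b : ℕ) (ha : a ≠ 1) (hb : 180 ≤ b) (h : Nat.Coprime a b) :
    (0.05334 : ℝ) * (Nat.primeCounting (14 * b) : ℝ) < (piStar a b : ℝ) := by
  have primes_below_b : (0.05334 : ℝ) * Nat.primeCounting (14 * b) < b.primeCounting' - 1 := by
    rcases lt_or_ge b 2700 with hb' | hb'
    · exact mul_primeCounting_lt_primeCounting'_of_lt hb hb'
    · exact mul_primeCounting_lt_primeCounting'_of_ge hb'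
  have le_piStar : (b.primeCounting' : ℝ) ≤ piStar a b + 1 := by
    exact_mod_cast Nat.sub_le_iff_le_add.1 (primeCounting'_sub_one_le_piStar ha h)
  linarith

theorem piStar_gt_case4 (a b : ℕ) (ha : 3 ≤ a) (ha' : a ≤ 15) (hb : 181 ≤ b)
    (h : Nat.Coprime a b) :
    (0.05334 : ℝ) * (Nat.primeCounting (S a b) : ℝ) < (piStar a b : ℝ) := by
  have π_le := Nat.monotone_primeCounting <|
    (S_le_pred_mul a b).trans (by gcongr; omega : _ ≤ 14 * b)
  exact lt_of_le_of_lt (by gcongr) (piStar_gt_case4_general a b (by omega) (by omega) h)
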